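/- arXiv:1808.05225 — 4 statements merged into one kernel-verified Lean document; each statement's English description precedes it below -/
import Mathlib

section
/- Let H₁, H₂ : ℝ → B(𝓗) be continuous, and let U, V : ℝ × ℝ → B(𝓗) be jointly continuous two-parameter families with unitary values satisfying, for all s ≤ t: U(s,s) = 1, ∂_t U(s,t) = −i H₁(t) U(s,t), and the cocycle property U(0,t) = U(s,t) U(0,s) for 0 ≤ s ≤ t, and likewise for V with generator H₂. Then for every O ∈ B(𝓗) and every t ≥ 0, ‖U(0,t)* O U(0,t) − V(0,t)* O V(0,t)‖ ≤ ∫₀ᵗ ‖[V(s,t)* O V(s,t), H₁(s) − H₂(s)]‖ ds. -/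
/-!
With `W s = V(0,s)* U(0,s)` and `B = V(0,t)* O V(0,t)`, the path `s ↦ W(s)* B W(s)` runs from
`V(0,t)* O V(0,t)` at `s = 0` to `U(0,t)* O U(0,t)` at `s = t`, so the difference is the integral
of its derivative. Differentiating unitarity shows that the generators are self-adjoint
(`generator_isSelfAdjoint`), whence `W' = i V(0,s)* (H₂ - H₁) U(0,s)`. By the cocycle property
`V(s,t) = V(0,t) V(0,s)*`, and the derivative of the path at `s` equals
`-i U(0,s)* [V(s,t)* O V(s,t), H₁(s) - H₂(s)] U(0,s)`, whose norm is that of the commutator because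
`U(0,s)` is unitary.
-/

/-- The generator is not assumed self-adjoint: this follows by differentiating `U* U = 1` at an
interior point of the half-line `[s, ∞)` on which `U(s,·)` is unitary. -/
lemma generator_isSelfAdjoint
    {𝓗 : Type*} [NormedAddCommGroup 𝓗] [InnerProductSpace ℂ 𝓗] [CompleteSpace 𝓗]
    (H : ℝ → (𝓗 →L[ℂ] 𝓗)) (U : ℝ → ℝ → (𝓗 →L[ℂ] 𝓗))
    (hUu : ∀ s t : ℝ, s ≤ t → U s t ∈ unitary (𝓗 →L[ℂ] 𝓗))
    (hUd : ∀ s t : ℝ, s ≤ t → HasDerivAt (fun τ => U s τ) (-(Complex.I • (H t * U s t))) t)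
    (t : ℝ) : star (H t) = H t := by
  have hd := hUd (t - 1) t (by linarith)
  have hprod := hd.star.mul hd
  have hconst : HasDerivAt (fun τ => star (U (t - 1) τ) * U (t - 1) τ) 0 t := by
    refine (hasDerivAt_const t (1 : 𝓗 →L[ℂ] 𝓗)).congr_of_eventuallyEq ?_
    filter_upwards [eventually_ge_nhds (show t - 1 < t by linarith)] with τ hτ
    exact (Unitary.mem_iff.1 (hUu _ _ hτ)).1
  have h0 := hprod.unique hconst
  obtain ⟨-, hu⟩ := Unitary.mem_iff.1 (hUu (t - 1) t (by linarith))
  generalize U (t - 1) t = u at h0 hu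
  have h1 : Complex.I • (star u * (star (H t) - H t) * u) = 0 := by
    rw [← h0]
    simp only [star_neg, star_smul, star_mul, Complex.star_def, Complex.conj_I, neg_smul, neg_neg,
      smul_mul_assoc, mul_neg, mul_smul_comm, mul_sub, sub_mul, smul_sub, mul_assoc]
    abel
  have h2 : star u * (star (H t) - H t) * u = 0 :=
    (smul_eq_zero.1 h1).resolve_left Complex.I_ne_zero
  have h3 : star (H t) - H t = u * (star u * (star (H t) - H t) * u) * star u := by
    calc star (H t) - H t = (u * star u) * (star (H t) - H t) * (u * star u) := by simp [hu]
      _ = _ := by simp only [mul_assoc]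
  rw [h2, mul_zero, zero_mul] at h3
  exact sub_eq_zero.1 h3

open MeasureTheory

/-- Lemma 3 of the paper (generalized to time-dependent Hamiltonians):
the difference between Heisenberg evolutions of an observable `O` under two
two-parameter unitary propagators `U` and `V` (with generators `H₁` and `H₂`)
is bounded by the integral of the commutator norm. -/
theorem heisenberg_evolution_difference_bound
    {𝓗 : Type*} [NormedAddCommGroup 𝓗] [InnerProductSpace ℂ 𝓗] [CompleteSpace 𝓗]
    (H₁ H₂ : ℝ → (𝓗 →L[ℂ] 𝓗)) (hH₁ : Continuous H₁) (hH₂ : Continuous H₂)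
    (U V : ℝ → ℝ → (𝓗 →L[ℂ] 𝓗))
    (hUc : Continuous fun p : ℝ × ℝ => U p.1 p.2)
    (hVc : Continuous fun p : ℝ × ℝ => V p.1 p.2)
    (hUu : ∀ s t : ℝ, s ≤ t → U s t ∈ unitary (𝓗 →L[ℂ] 𝓗))
    (hVu : ∀ s t : ℝ, s ≤ t → V s t ∈ unitary (𝓗 →L[ℂ] 𝓗))
    (hUs : ∀ s : ℝ, U s s = 1) (hVs : ∀ s : ℝ, V s s = 1)
    (hUd : ∀ s t : ℝ, s ≤ t → HasDerivAt (fun τ => U s τ) (-(Complex.I • (H₁ t * U s t))) t)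
    (hVd : ∀ s t : ℝ, s ≤ t → HasDerivAt (fun τ => V s τ) (-(Complex.I • (H₂ t * V s t))) t)
    (hUcoc : ∀ s t : ℝ, 0 ≤ s → s ≤ t → U 0 t = U s t * U 0 s)
    (hVcoc : ∀ s t : ℝ, 0 ≤ s → s ≤ t → V 0 t = V s t * V 0 s)
    (O : 𝓗 →L[ℂ] 𝓗) (t : ℝ) (ht : 0 ≤ t) :
    ‖star (U 0 t) * O * U 0 t - star (V 0 t) * O * V 0 t‖ ≤
      ∫ s in (0 : ℝ)..t,
        ‖(star (V s t) * O * V s t) * (H₁ s - H₂ s) -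
          (H₁ s - H₂ s) * (star (V s t) * O * V s t)‖ := by
  have hsa₁ := generator_isSelfAdjoint H₁ U hUu hUd
  have hsa₂ := generator_isSelfAdjoint H₂ V hVu hVd
  set B := star (V 0 t) * O * V 0 t with hB
  have hU0 : Continuous (U 0) := hUc.comp (by fun_prop : Continuous fun s : ℝ => ((0 : ℝ), s))
  have hV0 : Continuous (V 0) := hVc.comp (by fun_prop : Continuous fun s : ℝ => ((0 : ℝ), s))
  have hVt : Continuous fun s => V s t :=
    hVc.comp (by fun_prop : Continuous fun s : ℝ => (s, t))
  let W : ℝ → (𝓗 →L[ℂ] 𝓗) := fun s => star (V 0 s) * U 0 s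
  let W' : ℝ → (𝓗 →L[ℂ] 𝓗) := fun s => Complex.I • (star (V 0 s) * (H₂ s - H₁ s) * U 0 s)
  have hWc : Continuous W := hV0.star.mul hU0
  have hW'c : Continuous W' :=
    ((hV0.star.mul (hH₂.sub hH₁)).mul hU0).const_smul Complex.I
  have hW : ∀ s, 0 ≤ s → HasDerivAt W (W' s) s := by
    intro s hs
    refine ((hVd 0 s hs).star.mul (hUd 0 s hs)).congr_deriv ?_
    simp only [W', star_neg, star_smul, star_mul, Complex.star_def, Complex.conj_I, neg_smul,
      neg_neg, smul_mul_assoc, mul_neg, mul_smul_comm, mul_sub, sub_mul, smul_sub, mul_assoc,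
      hsa₂ s]
    abel
  let f : ℝ → (𝓗 →L[ℂ] 𝓗) := fun s => star (W s) * B * W s
  let f' : ℝ → (𝓗 →L[ℂ] 𝓗) := fun s => star (W' s) * B * W s + star (W s) * B * W' s
  have hf'c : Continuous f' :=
    ((hW'c.star.mul continuous_const).mul hWc).add ((hWc.star.mul continuous_const).mul hW'c)
  have hf : ∀ s, 0 ≤ s → HasDerivAt f (f' s) s := fun s hs =>
    (((hW s hs).star.mul_const B).mul (hW s hs))
  have hf0 : f 0 = B := by simp [f, W, hUs, hVs]
  have hft : f t = star (U 0 t) * O * U 0 t := by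
    obtain ⟨-, hv⟩ := Unitary.mem_iff.1 (hVu 0 t ht)
    calc f t = star (U 0 t) * (V 0 t * star (V 0 t)) * O * (V 0 t * star (V 0 t)) * U 0 t := by
          simp only [f, W, hB, star_mul, star_star, mul_assoc]
      _ = _ := by simp [hv]
  have hint : ∫ s in (0 : ℝ)..t, f' s = f t - f 0 := by
    refine intervalIntegral.integral_eq_sub_of_hasDerivAt (fun s hs => hf s ?_)
      (hf'c.intervalIntegrable _ _)
    rw [Set.uIcc_of_le ht] at hs
    exact hs.1
  rw [← hft, ← hf0, ← hint]
  refine (intervalIntegral.norm_integral_le_integral_norm ht).trans ?_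
  have hCc : Continuous fun s => star (V s t) * O * V s t :=
    (hVt.star.mul continuous_const).mul hVt
  refine intervalIntegral.integral_mono_on ht (hf'c.norm.intervalIntegrable _ _)
    (((hCc.mul (hH₁.sub hH₂)).sub ((hH₁.sub hH₂).mul hCc)).norm.intervalIntegrable _ _) ?_
  rintro s ⟨hs0, hst⟩
  -- The cocycle property turns `V(0,s) B V(0,s)*` into `V(s,t)* O V(s,t)`.
  have hC : V 0 s * B * star (V 0 s) = star (V s t) * O * V s t := by
    obtain ⟨-, hv⟩ := Unitary.mem_iff.1 (hVu 0 s hs0)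
    calc V 0 s * B * star (V 0 s)
        = (V 0 s * star (V 0 s)) * star (V s t) * O * V s t * (V 0 s * star (V 0 s)) := by
          rw [hB, hVcoc s t hs0 hst]
          simp only [star_mul, mul_assoc]
      _ = _ := by simp [hv]
  have hf'eq : f' s = (-Complex.I) • (star (U 0 s) * ((star (V s t) * O * V s t) * (H₁ s - H₂ s) -
          (H₁ s - H₂ s) * (star (V s t) * O * V s t)) * U 0 s) := by
    rw [← hC]
    simp only [f', W, W', star_smul, star_mul, star_sub, star_star, Complex.star_def,
      Complex.conj_I, neg_smul, smul_mul_assoc, mul_smul_comm, mul_sub, sub_mul, smul_sub,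
      mul_assoc, hsa₁ s, hsa₂ s, neg_mul]
    abel
  rw [hf'eq, norm_smul, norm_neg, Complex.norm_I, one_mul,
    CStarRing.norm_mul_mem_unitary _ (hUu 0 s hs0),
    CStarRing.norm_mem_unitary_mul _ (Unitary.star_mem (hUu 0 s hs0))]
end

section
/- Let H₁, H₂, H₃ : ℝ → B(𝓗) be continuous with H₁(s) H₂(t) = H₂(t) H₁(s) for all s, t ∈ ℝ. For j = 1, 2, 3 let U_j : ℝ → B(𝓗) have unitary values and satisfy U_j(0) = 1 and dU_j/dt = −i H_j(t) U_j(t) for all t. Then the map W(t) := U₂(t)* U₁(t)* U₃(t) is differentiable and satisfies dW/dt = −i G(t) W(t), where G(t) := U₂(t)* U₁(t)* (H₃(t) − H₁(t) − H₂(t)) U₁(t) U₂(t). -/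
/-!
Differentiating `U U* = 1` shows that the generator `H` of a unitary evolution `U` is self-adjoint, so
`dU*/dt = i U* H` (`hasDerivAt_star_evolution`). If an operator `A` commutes with every `H(s)`, then
`U(s)* A U(s)` has zero derivative, hence equals its value `A` at `s = 0`, so `U(s)*` commutes with `A`
(`star_evolution_commute`). The product rule gives
`dW/dt = i U₂* H₂ U₁* U₃ + i U₂* U₁* H₁ U₃ - i U₂* U₁* H₃ U₃`; moving `H₂(t)` through `U₁(t)*` turns this
into `-i U₂* U₁* (H₃ - H₁ - H₂) U₃`, which is `-i G W` because `U₁ U₂ U₂* U₁* = 1`.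
-/

/-- The generator of a unitary evolution is self-adjoint: the constant function `U U*`
has derivative `-i (H - H*)`. -/
lemma star_generator_eq
    {𝓗 : Type*} [NormedAddCommGroup 𝓗] [InnerProductSpace ℂ 𝓗] [CompleteSpace 𝓗]
    {H U : ℝ → (𝓗 →L[ℂ] 𝓗)} (hu : ∀ t : ℝ, U t ∈ unitary (𝓗 →L[ℂ] 𝓗))
    (hd : ∀ t : ℝ, HasDerivAt U (-(Complex.I • (H t * U t))) t) (t : ℝ) :
    star (H t) = H t := by
  have h := (hd t).mul (hd t).star
  have hconst : (U * fun s => star (U s)) = fun _ => (1 : 𝓗 →L[ℂ] 𝓗) :=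
    funext fun s => Unitary.mul_star_self_of_mem (hu s)
  rw [hconst] at h
  have h0 := h.unique (hasDerivAt_const t _)
  have hU := Unitary.mul_star_self_of_mem (hu t)
  have h1 : U t * (star (U t) * star (H t)) = star (H t) := by
    rw [← mul_assoc, hU, one_mul]
  simp only [star_neg, star_smul, star_mul, neg_mul, smul_mul_assoc, mul_smul_comm,
    mul_assoc, hU, h1, mul_one, Complex.star_def, Complex.conj_I, neg_smul, neg_neg] at h0
  rw [neg_add_eq_zero] at h0
  exact (smul_right_injective _ Complex.I_ne_zero h0).symm

lemma hasDerivAt_star_evolution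
    {𝓗 : Type*} [NormedAddCommGroup 𝓗] [InnerProductSpace ℂ 𝓗] [CompleteSpace 𝓗]
    {H U : ℝ → (𝓗 →L[ℂ] 𝓗)} (hu : ∀ t : ℝ, U t ∈ unitary (𝓗 →L[ℂ] 𝓗))
    (hd : ∀ t : ℝ, HasDerivAt U (-(Complex.I • (H t * U t))) t) (t : ℝ) :
    HasDerivAt (fun s => star (U s)) (Complex.I • (star (U t) * H t)) t := by
  have h := (hd t).star
  simpa only [star_neg, star_smul, star_mul, star_generator_eq hu hd t, Complex.star_def,
    Complex.conj_I, neg_smul, neg_neg] using h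

/-- An operator commuting with the generator at all times commutes with the adjoint evolution,
since `U(s)* A U(s)` is constant in `s`. -/
lemma star_evolution_commute
    {𝓗 : Type*} [NormedAddCommGroup 𝓗] [InnerProductSpace ℂ 𝓗] [CompleteSpace 𝓗]
    {H U : ℝ → (𝓗 →L[ℂ] 𝓗)} (hu : ∀ t : ℝ, U t ∈ unitary (𝓗 →L[ℂ] 𝓗)) (h0 : U 0 = 1)
    (hd : ∀ t : ℝ, HasDerivAt U (-(Complex.I • (H t * U t))) t)
    (A : 𝓗 →L[ℂ] 𝓗) (hA : ∀ s, H s * A = A * H s) (t : ℝ) :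
    star (U t) * A = A * star (U t) := by
  have hV : ∀ s, HasDerivAt (fun s => star (U s) * A * U s) 0 s := by
    intro s
    refine (((hasDerivAt_star_evolution hu hd s).mul_const A).mul (hd s)).congr_deriv ?_
    have e : star (U s) * H s * A * U s = star (U s) * A * (H s * U s) := by
      rw [mul_assoc (star (U s)), hA]
      simp only [mul_assoc]
    simp only [smul_mul_assoc, mul_neg, mul_smul_comm, e, add_neg_cancel]
  have hc := is_const_of_deriv_eq_zero (fun s => (hV s).differentiableAt)
    (fun s => (hV s).deriv) t 0
  simp only [h0, star_one, one_mul, mul_one] at hc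
  calc star (U t) * A = star (U t) * A * U t * star (U t) := by
        rw [mul_assoc _ (U t), Unitary.mul_star_self_of_mem (hu t), mul_one]
    _ = A * star (U t) := by rw [hc]

/-- The generator of `W t = U₂(t)* U₁(t)* U₃(t)` (Eq. (5)–(6) of the paper):
if `U_j` are unitary evolutions generated by `H_j`, and `H₁` commutes with `H₂`,
then `W` satisfies `dW/dt = -i G(t) W(t)` with
`G(t) = U₂(t)* U₁(t)* (H₃(t) - H₁(t) - H₂(t)) U₁(t) U₂(t)`. -/
theorem generator_of_interaction_picture_unitary
    {𝓗 : Type*} [NormedAddCommGroup 𝓗] [InnerProductSpace ℂ 𝓗] [CompleteSpace 𝓗]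
    (H₁ H₂ H₃ : ℝ → (𝓗 →L[ℂ] 𝓗))
    (hH₁ : Continuous H₁) (hH₂ : Continuous H₂) (hH₃ : Continuous H₃)
    (hcomm : ∀ s t : ℝ, H₁ s * H₂ t = H₂ t * H₁ s)
    (U₁ U₂ U₃ : ℝ → (𝓗 →L[ℂ] 𝓗))
    (hU₁u : ∀ t : ℝ, U₁ t ∈ unitary (𝓗 →L[ℂ] 𝓗))
    (hU₂u : ∀ t : ℝ, U₂ t ∈ unitary (𝓗 →L[ℂ] 𝓗))
    (hU₃u : ∀ t : ℝ, U₃ t ∈ unitary (𝓗 →L[ℂ] 𝓗))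
    (hU₁0 : U₁ 0 = 1) (hU₂0 : U₂ 0 = 1) (hU₃0 : U₃ 0 = 1)
    (hU₁d : ∀ t : ℝ, HasDerivAt U₁ (-(Complex.I • (H₁ t * U₁ t))) t)
    (hU₂d : ∀ t : ℝ, HasDerivAt U₂ (-(Complex.I • (H₂ t * U₂ t))) t)
    (hU₃d : ∀ t : ℝ, HasDerivAt U₃ (-(Complex.I • (H₃ t * U₃ t))) t) :
    ∀ t : ℝ, HasDerivAt (fun τ => star (U₂ τ) * star (U₁ τ) * U₃ τ)
      (-(Complex.I •
        ((star (U₂ t) * star (U₁ t) * (H₃ t - H₁ t - H₂ t) * U₁ t * U₂ t) *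
          (star (U₂ t) * star (U₁ t) * U₃ t)))) t := by
  intro t
  refine (((hasDerivAt_star_evolution hU₂u hU₂d t).mul
    (hasDerivAt_star_evolution hU₁u hU₁d t)).mul (hU₃d t)).congr_deriv ?_
  have hc : star (U₁ t) * H₂ t = H₂ t * star (U₁ t) :=
    star_evolution_commute hU₁u hU₁0 hU₁d (H₂ t) (fun s => hcomm s t) t
  have hW : (star (U₂ t) * star (U₁ t) * (H₃ t - H₁ t - H₂ t) * U₁ t * U₂ t) *
      (star (U₂ t) * star (U₁ t) * U₃ t) =
      star (U₂ t) * star (U₁ t) * (H₃ t - H₁ t - H₂ t) * U₃ t := by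
    have e : U₁ t * (U₂ t * (star (U₂ t) * (star (U₁ t) * U₃ t))) = U₃ t := by
      rw [← mul_assoc (U₂ t), Unitary.mul_star_self_of_mem (hU₂u t), one_mul, ← mul_assoc,
        Unitary.mul_star_self_of_mem (hU₁u t), one_mul]
    simp only [mul_assoc, e]
  have h2 : star (U₂ t) * star (U₁ t) * H₂ t * U₃ t = star (U₂ t) * H₂ t * star (U₁ t) * U₃ t := by
    rw [mul_assoc (star (U₂ t)), hc, mul_assoc (star (U₂ t)) (H₂ t)]
  rw [hW]
  simp only [Pi.mul_apply, mul_sub, sub_mul, h2, smul_mul_assoc, mul_smul_comm, add_mul, smul_sub,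
    mul_neg, ← mul_assoc]
  abel
end

section
/- If A ⊆ ℝ^D is compact and convex and r > 0, then the (D−1)-dimensional Hausdorff measure of the frontier of the inner parallel set A_r := {a ∈ A : dist(a, ∂A) ≥ r} is at most that of the frontier of A; that is, H^{D−1}(∂A_r) ≤ H^{D−1}(∂A). -/
open MeasureTheory

/-!
The inner parallel set `A_r` is a closed convex subset of `A`: convexity follows since its points
are the centres of the open balls of radius `r` contained in `A`. The metric projection onto a
nonempty closed convex set `C ⊆ A` is 1-Lipschitz, so it does not increase Hausdorff measure, and it
suffices that the image of `∂A` covers `∂C` (`frontier_subset_image_of_obtuse`).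

To see the latter, let `y ∉ C` with projection `c`. The whole ray from `c` through `y` projects
to `c`, and since `A` is bounded this ray meets `∂A`; hence `c` lies in the image of `∂A`. Letting
`y` tend to a point of `∂C`, and using that the image of the compact set `∂A` is closed, every
point of `∂C` is in the image.
-/

lemma IsPreconnected.inter_frontier_nonempty {X : Type*} [TopologicalSpace X] {s t : Set X}
    (ht : IsPreconnected t) (hin : (t ∩ s).Nonempty) (hout : (t ∩ sᶜ).Nonempty) :
    (t ∩ frontier s).Nonempty := by
  rw [frontier_eq_closure_inter_closure]
  refine isPreconnected_closed_iff.mp ht _ _ isClosed_closure isClosed_closure (fun x _ => ?_)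
    (hin.mono (Set.inter_subset_inter_right _ subset_closure))
    (hout.mono (Set.inter_subset_inter_right _ subset_closure))
  by_cases hx : x ∈ s
  · exact Or.inl (subset_closure hx)
  · exact Or.inr (subset_closure hx)

section Projection

variable {E : Type*} [NormedAddCommGroup E] [InnerProductSpace ℝ E]

/-- A map into `C` satisfying the obtuse-angle characterization of the metric projection onto a
convex set is 1-Lipschitz. -/
lemma lipschitzWith_one_of_obtuse {C : Set E} {P : E → E} (hP : ∀ x, P x ∈ C)
    (hobt : ∀ x, ∀ w ∈ C, inner ℝ (x - P x) (w - P x) ≤ 0) : LipschitzWith 1 P := by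
  refine LipschitzWith.of_dist_le_mul fun x y => ?_
  rw [dist_eq_norm, dist_eq_norm, NNReal.coe_one, one_mul]
  have h1 := hobt x (P y) (hP y)
  have h2 := hobt y (P x) (hP x)
  have h3 : inner ℝ (x - y) (P x - P y) = inner ℝ (P x - P y) (P x - P y)
      - inner ℝ (x - P x) (P y - P x) - inner ℝ (y - P y) (P x - P y) := by
    simp only [inner_sub_left, inner_sub_right]
    ring
  rw [real_inner_self_eq_norm_sq] at h3
  have h4 := real_inner_le_norm (x - y) (P x - P y)
  by_contra! hlt
  nlinarith [norm_nonneg (x - y), norm_nonneg (P x - P y)]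

/-- The obtuse-angle condition determines the projection. -/
lemma eq_of_obtuse {C : Set E} {P : E → E} (hP : ∀ x, P x ∈ C)
    (hobt : ∀ x, ∀ w ∈ C, inner ℝ (x - P x) (w - P x) ≤ 0) {x c : E} (hc : c ∈ C)
    (hxc : ∀ w ∈ C, inner ℝ (x - c) (w - c) ≤ 0) : P x = c := by
  have h1 := hobt x c hc
  have h2 := hxc (P x) (hP x)
  have h3 : inner ℝ (P x - c) (P x - c)
      = inner ℝ (x - P x) (c - P x) + inner ℝ (x - c) (P x - c) := by
    simp only [inner_sub_left, inner_sub_right]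
    ring
  rw [real_inner_self_eq_norm_sq] at h3
  have h4 : ‖P x - c‖ = 0 := by nlinarith [norm_nonneg (P x - c)]
  exact sub_eq_zero.mp (norm_eq_zero.mp h4)

/-- A ray issuing from a point of a bounded set meets its frontier. -/
lemma exists_ray_mem_frontier {A : Set E} (hA : Bornology.IsBounded A) {c v : E} (hc : c ∈ A)
    (hv : v ≠ 0) : ∃ t : ℝ, 0 ≤ t ∧ c + t • v ∈ frontier A := by
  have hpre : IsPreconnected ((fun t : ℝ => c + t • v) '' Set.Ici 0) :=
    isPreconnected_Ici.image _ (by fun_prop)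
  have hout : (((fun t : ℝ => c + t • v) '' Set.Ici 0) ∩ Aᶜ).Nonempty := by
    obtain ⟨R, hR⟩ := hA.subset_closedBall c
    have hv' : 0 < ‖v‖ := norm_pos_iff.mpr hv
    refine ⟨c + ((|R| + 1) / ‖v‖) • v, ⟨_, Set.mem_Ici.mpr (by positivity), rfl⟩, fun hmem => ?_⟩
    have h := hR hmem
    rw [mem_closedBall_iff_norm, add_sub_cancel_left, norm_smul, Real.norm_eq_abs,
      abs_of_nonneg (by positivity), div_mul_cancel₀ _ hv'.ne'] at h
    linarith [le_abs_self R]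
  obtain ⟨_, ⟨t, ht, rfl⟩, hf⟩ := hpre.inter_frontier_nonempty
    ⟨c, ⟨0, Set.mem_Ici.mpr le_rfl, by simp⟩, hc⟩ hout
  exact ⟨t, ht, hf⟩

/-- The projection onto a closed subset `C` of a compact set `A` maps the frontier of `A` onto a
set covering the frontier of `C`. -/
lemma frontier_subset_image_of_obtuse {A C : Set E} (hA : IsCompact A) (hCA : C ⊆ A)
    (hC : IsClosed C) {P : E → E} (hP : ∀ x, P x ∈ C)
    (hobt : ∀ x, ∀ w ∈ C, inner ℝ (x - P x) (w - P x) ≤ 0) :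
    frontier C ⊆ P '' frontier A := by
  have hcont : Continuous P := (lipschitzWith_one_of_obtuse hP hobt).continuous
  have hclosed : IsClosed (P '' frontier A) :=
    ((hA.of_isClosed_subset isClosed_frontier hA.isClosed.frontier_subset).image hcont).isClosed
  have hout : ∀ y ∈ Cᶜ, P y ∈ P '' frontier A := by
    intro y hy
    have hne : y - P y ≠ 0 := fun h => hy (sub_eq_zero.mp h ▸ hP y)
    obtain ⟨t, ht, hf⟩ := exists_ray_mem_frontier hA.isBounded (hCA (hP y)) hne
    refine ⟨_, hf, eq_of_obtuse hP hobt (hP y) fun w hw => ?_⟩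
    rw [add_sub_cancel_left, real_inner_smul_left]
    exact mul_nonpos_of_nonneg_of_nonpos ht (hobt y w hw)
  intro y hy
  have hyC : y ∈ C := hC.frontier_subset hy
  have hPy : P y = y := eq_of_obtuse hP hobt hyC fun w _ => by simp
  have hycl : y ∈ closure Cᶜ := by
    rw [frontier_eq_closure_inter_closure] at hy
    exact hy.2
  rw [← hPy]
  exact closure_minimal hout (hclosed.preimage hcont) hycl

end Projection

/-- Membership in the inner parallel set, in a form that makes convexity evident. The frontier must
be nonempty since `Metric.infDist a ∅ = 0`. -/
lemma mem_innerParallel_iff {E : Type*} [NormedAddCommGroup E] [NormedSpace ℝ E] {A : Set E}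
    (hne : (frontier A).Nonempty) {r : ℝ} (hr : 0 < r) (a : E) :
    (a ∈ A ∧ r ≤ Metric.infDist a (frontier A)) ↔ Metric.ball a r ⊆ A := by
  constructor
  · rintro ⟨ha, hd⟩ x hx
    by_contra hxA
    obtain ⟨z, hz, hzf⟩ := (convex_ball a r).isPreconnected.inter_frontier_nonempty
      ⟨a, Metric.mem_ball_self hr, ha⟩ ⟨x, hx, hxA⟩
    have h1 := Metric.infDist_le_dist_of_mem (x := a) hzf
    rw [Metric.mem_ball, dist_comm] at hz
    linarith
  · intro h
    refine ⟨h (Metric.mem_ball_self hr), (Metric.le_infDist hne).mpr fun z hz => ?_⟩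
    by_contra! hlt
    have hzi : z ∈ interior A :=
      interior_maximal h Metric.isOpen_ball (by rwa [Metric.mem_ball, dist_comm])
    exact hz.2 hzi

lemma convex_innerParallel {E : Type*} [NormedAddCommGroup E] [NormedSpace ℝ E] {A : Set E}
    (hA : Convex ℝ A) (hne : (frontier A).Nonempty) {r : ℝ} (hr : 0 < r) :
    Convex ℝ {a ∈ A | r ≤ Metric.infDist a (frontier A)} := by
  intro a ha b hb s t hs ht hst
  rw [Set.mem_ofPred_eq, mem_innerParallel_iff hne hr] at ha hb ⊢
  intro x hx
  rw [mem_ball_iff_norm] at hx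
  have h1 := ha (show a + (x - (s • a + t • b)) ∈ Metric.ball a r by simpa [mem_ball_iff_norm])
  have h2 := hb (show b + (x - (s • a + t • b)) ∈ Metric.ball b r by simpa [mem_ball_iff_norm])
  have h3 := hA h1 h2 hs ht hst
  have h4 : s • (a + (x - (s • a + t • b))) + t • (b + (x - (s • a + t • b))) = x := by
    obtain rfl : t = 1 - s := by linarith
    module
  rwa [h4] at h3

/-- Theorem (convex sets are shrinkable, Appendix F.2.2 of the paper): if
`A ⊆ ℝ^D` is compact and convex and `r > 0`, then the boundary area of the
inner parallel set `A_r = {a ∈ A : dist(a, ∂A) ≥ r}` is at most that of `A`. -/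
theorem inner_parallel_set_boundary_area_le (D : ℕ) (hD : 1 ≤ D)
    (A : Set (EuclideanSpace ℝ (Fin D))) (hAc : IsCompact A) (hAconv : Convex ℝ A)
    (r : ℝ) (hr : 0 < r) :
    μH[(D : ℝ) - 1] (frontier {a ∈ A | r ≤ Metric.infDist a (frontier A)})
      ≤ μH[(D : ℝ) - 1] (frontier A) := by
  set C := {a ∈ A | r ≤ Metric.infDist a (frontier A)} with hCdef
  rcases C.eq_empty_or_nonempty with hC0 | hCne
  · simp [hC0]
  have hCA : C ⊆ A := fun a ha => ha.1
  have hCcl : IsClosed C := hAc.isClosed.inter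
    (isClosed_le continuous_const (Metric.continuous_infDist_pt _))
  have hfne : (frontier A).Nonempty := by
    rw [Set.nonempty_iff_ne_empty]
    intro h
    obtain ⟨a, ha⟩ := hCne
    have h2 := ha.2
    rw [h, Metric.infDist_empty] at h2
    linarith
  have hCconv : Convex ℝ C := convex_innerParallel hAconv hfne hr
  have hex : ∀ x, ∃ c ∈ C, ∀ w ∈ C, inner ℝ (x - c) (w - c) ≤ 0 := by
    intro x
    obtain ⟨c, hc, hmin⟩ := exists_norm_eq_iInf_of_complete_convex hCne hCcl.isComplete hCconv x
    exact ⟨c, hc, (norm_eq_iInf_iff_real_inner_le_zero hCconv hc).mp hmin⟩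
  choose P hP hobt using hex
  have hdim : (0 : ℝ) ≤ (D : ℝ) - 1 := sub_nonneg.mpr (by exact_mod_cast hD)
  calc μH[(D : ℝ) - 1] (frontier C) ≤ μH[(D : ℝ) - 1] (P '' frontier A) :=
        measure_mono (frontier_subset_image_of_obtuse hAc hCA hCcl hP hobt)
    _ ≤ μH[(D : ℝ) - 1] (frontier A) := by
        simpa using (lipschitzWith_one_of_obtuse hP hobt).hausdorffMeasure_image_le hdim (frontier A)
end

section
/- Let A ⊆ ℝ^D be compact and convex, let r > 0, and suppose the inner parallel set A_r := {a ∈ A : dist(a, ∂A) ≥ r} is nonempty. Let p : ℝ^D → ℝ^D be a nearest-point projection onto A_r, i.e., for every x ∈ ℝ^D one has p(x) ∈ A_r and ‖x − p(x)‖ = dist(x, A_r). Then p maps the frontier of A onto the frontier of A_r: p(∂A) = ∂A_r. -/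
/-!
Write `B` for the inner parallel set `A_r`. Since balls are connected, a point of `A` at distance at
least `r` from `∂A` has its whole closed `r`-ball inside `A`, so `B = {a | closedBall a r ⊆ A}`
(`inner_parallel_eq`); in particular `B` is convex and closed, and it misses `∂A`.

`p(∂A) ⊆ ∂B`: a point `x ∉ B` cannot have its nearest point in the interior of `B`, as a small step
from that point towards `x` would stay in `B` and come closer to `x`.

`∂B ⊆ p(∂A)`: a point `b ∈ ∂B` has a nonzero outer normal vector `v` (`exists_outer_normal`). The
ray `b + t v`, `t ≥ 0`, starts in the bounded set `A` and leaves it, hence meets `∂A` in some `x`.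
All points of the ray have `b` as their unique nearest point in `B`, so `p x = b`.
-/

open Metric

/-- A preconnected set meeting a closed set `A` but not its frontier lies in `A`. -/
lemma subset_of_disjoint_frontier {X : Type*} [TopologicalSpace X] {s A : Set X}
    (hs : IsPreconnected s) (hA : IsClosed A) (hsA : (s ∩ A).Nonempty)
    (hd : ∀ x ∈ s, x ∉ frontier A) : s ⊆ A := by
  have key : ∀ x ∈ s, x ∈ A → x ∈ interior A := fun x hx hxA => by
    by_contra h
    exact hd x hx ⟨subset_closure hxA, h⟩
  intro y hy
  by_contra hyA
  obtain ⟨x, hx, hxA⟩ := hsA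
  obtain ⟨z, -, hz1, hz2⟩ := hs (interior A) Aᶜ isOpen_interior hA.isOpen_compl
    (fun z hz => by
      by_cases h : z ∈ A
      · exact Or.inl (key z hz h)
      · exact Or.inr h)
    ⟨x, hx, key x hx hxA⟩ ⟨y, hy, hyA⟩
  exact hz2 (interior_subset hz1)

section

variable {E : Type*} [NormedAddCommGroup E] [InnerProductSpace ℝ E]

lemma inner_parallel_eq {A : Set E} (hA : IsClosed A) (hfr : (frontier A).Nonempty) {r : ℝ}
    (hr : 0 < r) : {a ∈ A | r ≤ infDist a (frontier A)} = {a | closedBall a r ⊆ A} := by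
  ext a
  constructor
  · rintro ⟨haA, har⟩
    have hball : ball a r ⊆ A := by
      refine subset_of_disjoint_frontier (convex_ball a r).isPreconnected hA
        ⟨a, mem_ball_self hr, haA⟩ fun x hx hxf => ?_
      have h1 := infDist_le_dist_of_mem (x := a) hxf
      rw [mem_ball'] at hx
      linarith
    have h := closure_minimal hball hA
    rwa [closure_ball a hr.ne'] at h
  · intro h
    refine ⟨h (mem_closedBall_self hr.le), (le_infDist hfr).2 fun y hy => ?_⟩
    by_contra! hlt
    exact hy.2 (interior_maximal (ball_subset_closedBall.trans h) isOpen_ball (mem_ball'.2 hlt))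

lemma convex_inner_parallel {A : Set E} (hA : Convex ℝ A) (r : ℝ) :
    Convex ℝ {a | closedBall a r ⊆ A} := by
  intro x hx y hy s t hs ht hst z hz
  -- `z` is the same convex combination of the translates `x + w` and `y + w` by `w`, the offset of
  -- `z` from the centre.
  have hw : ‖z - (s • x + t • y)‖ ≤ r := by simpa [dist_eq_norm] using hz
  set w := z - (s • x + t • y) with hwdef
  have h1 : x + w ∈ A := hx (by simpa [dist_eq_norm] using hw)
  have h2 : y + w ∈ A := hy (by simpa [dist_eq_norm] using hw)
  have h3 := hA h1 h2 hs ht hst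
  have h4 : s • (x + w) + t • (y + w) = z := by
    have : s • (x + w) + t • (y + w) = (s • x + t • y) + (s + t) • w := by module
    rw [this, hst, one_smul, hwdef]
    abel
  rwa [h4] at h3

/-- Every point of a convex set that is not interior to it has a nonzero outer normal vector. If the
set has empty interior, it lies in a proper affine subspace, and a vector orthogonal to that
subspace serves. -/
lemma exists_outer_normal [FiniteDimensional ℝ E] {B : Set E} (hB : Convex ℝ B) {b : E}
    (hb : b ∈ B) (hbi : b ∉ interior B) :
    ∃ v : E, v ≠ 0 ∧ ∀ y ∈ B, inner ℝ v (y - b) ≤ 0 := by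
  by_cases hne : (interior B).Nonempty
  · obtain ⟨f, hf⟩ := geometric_hahn_banach_open_point hB.interior isOpen_interior hbi
    refine ⟨(InnerProductSpace.toDual ℝ E).symm f, ?_, fun y hy => ?_⟩
    · intro h
      have hf0 : f = 0 := by simpa using h
      obtain ⟨a, ha⟩ := hne
      simpa [hf0] using hf a ha
    · rw [InnerProductSpace.toDual_symm_apply, map_sub, sub_nonpos]
      have hy' : y ∈ closure (interior B) := by
        rw [hB.closure_interior_eq_closure_of_nonempty_interior hne]
        exact subset_closure hy
      exact closure_minimal (t := {z | f z ≤ f b}) (fun a ha => (hf a ha).le)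
        (isClosed_le f.continuous continuous_const) hy'
  · have hspan : affineSpan ℝ B ≠ ⊤ := fun h =>
      hne (hB.interior_nonempty_iff_affineSpan_eq_top.2 h)
    have hdir : (affineSpan ℝ B).direction ≠ ⊤ := fun h =>
      hspan ((AffineSubspace.direction_eq_top_iff_of_nonempty
        ⟨b, subset_affineSpan ℝ B hb⟩).1 h)
    have horth : ((affineSpan ℝ B).direction)ᗮ ≠ ⊥ := fun h =>
      hdir (Submodule.orthogonal_eq_bot_iff.1 h)
    obtain ⟨v, hv, hv0⟩ := Submodule.exists_mem_ne_zero_of_ne_bot horth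
    refine ⟨v, hv0, fun y hy => le_of_eq ?_⟩
    exact (Submodule.mem_orthogonal' _ v).1 hv _ (AffineSubspace.vsub_mem_direction
      (subset_affineSpan ℝ B hy) (subset_affineSpan ℝ B hb))

/-- A nearest point in `B` to a point outside `B` is not interior to `B`. -/
lemma nearest_notMem_interior {B : Set E} {x q : E} (hx : x ∉ B) (hqB : q ∈ B)
    (hq : ‖x - q‖ = infDist x B) : q ∉ interior B := by
  intro hqi
  have hpos : 0 < ‖x - q‖ := norm_pos_iff.2 (sub_ne_zero.2 fun h => hx (h ▸ hqB))
  have hcont : Filter.Tendsto (fun t : ℝ => q + t • (x - q)) (nhdsWithin 0 (Set.Ioi 0))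
      (nhds q) := by
    have : Continuous fun t : ℝ => q + t • (x - q) := by fun_prop
    simpa using (this.tendsto 0).mono_left nhdsWithin_le_nhds
  obtain ⟨t, htB, ht0, ht1⟩ := ((hcont.eventually (mem_interior_iff_mem_nhds.1 hqi)).and
    (Ioo_mem_nhdsGT (zero_lt_one' ℝ))).exists
  have h1 := infDist_le_dist_of_mem (x := x) htB
  have h2 : x - (q + t • (x - q)) = (1 - t) • (x - q) := by module
  rw [dist_eq_norm, h2, norm_smul, Real.norm_of_nonneg (by linarith), ← hq] at h1
  nlinarith

/-- Uniqueness of the nearest point: if `b ∈ B`, and `q` realizes the distance from `x` to `B` and lies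
in the half-space through `b` with outer normal `x - b`, then `q = b`. -/
lemma nearest_eq_of_normal {B : Set E} {x b q : E} (hb : b ∈ B)
    (hn : inner ℝ (x - b) (q - b) ≤ 0) (hq : ‖x - q‖ = infDist x B) : q = b := by
  have h1 : ‖x - q‖ ≤ ‖x - b‖ := by
    rw [hq, ← dist_eq_norm]
    exact infDist_le_dist_of_mem hb
  have h2 := norm_sub_sq_real (x - b) (q - b)
  rw [sub_sub_sub_cancel_right] at h2
  have h3 : ‖x - q‖ ^ 2 ≤ ‖x - b‖ ^ 2 := by gcongr
  have h4 : ‖q - b‖ ^ 2 ≤ 0 := by linarith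
  have h5 : ‖q - b‖ = 0 := by
    have := sq_nonneg ‖q - b‖
    exact pow_eq_zero_iff two_ne_zero |>.1 (le_antisymm h4 this)
  exact sub_eq_zero.1 (norm_eq_zero.1 h5)

lemma ray_meets_frontier {A : Set E} (hA : IsClosed A) (hbd : Bornology.IsBounded A) {b v : E}
    (hb : b ∈ A) (hv : v ≠ 0) : ∃ t : ℝ, 0 ≤ t ∧ b + t • v ∈ frontier A := by
  by_contra! hcon
  have hcont : Continuous fun t : ℝ => b + t • v := by fun_prop
  have hsub : (fun t : ℝ => b + t • v) '' Set.Ici 0 ⊆ A := by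
    refine subset_of_disjoint_frontier (isPreconnected_Ici.image _ hcont.continuousOn) hA
      ⟨b, ⟨0, by simp, by simp⟩, hb⟩ ?_
    rintro _ ⟨t, ht, rfl⟩
    exact hcon t ht
  obtain ⟨R, hR⟩ := hbd.subset_closedBall b
  have hv' : 0 < ‖v‖ := norm_pos_iff.2 hv
  have ht : 0 ≤ (|R| + 1) / ‖v‖ := by positivity
  have h := hR (hsub ⟨_, ht, rfl⟩)
  simp only [mem_closedBall, dist_eq_norm, add_sub_cancel_left, norm_smul,
    Real.norm_of_nonneg ht] at h
  rw [div_mul_cancel₀ _ hv'.ne'] at h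
  linarith [le_abs_self R]

end

/-- Appendix F.2.2 of the paper: the nearest-point projection onto the
(nonempty) inner parallel set `A_r = {a ∈ A : dist(a, ∂A) ≥ r}` of a compact
convex set `A ⊆ ℝ^D` maps the frontier of `A` onto the frontier of `A_r`. -/
theorem nearest_point_projection_maps_boundary_onto_boundary (D : ℕ) (hD : 1 ≤ D)
    (A : Set (EuclideanSpace ℝ (Fin D))) (hAc : IsCompact A) (hAconv : Convex ℝ A)
    (r : ℝ) (hr : 0 < r)
    (hne : {a ∈ A | r ≤ Metric.infDist a (frontier A)}.Nonempty)
    (p : EuclideanSpace ℝ (Fin D) → EuclideanSpace ℝ (Fin D))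
    (hp : ∀ x, p x ∈ {a ∈ A | r ≤ Metric.infDist a (frontier A)} ∧
      ‖x - p x‖ = Metric.infDist x {a ∈ A | r ≤ Metric.infDist a (frontier A)}) :
    p '' frontier A = frontier {a ∈ A | r ≤ Metric.infDist a (frontier A)} := by
  -- `infDist` to the empty set is `0`, so `∂A ≠ ∅` already follows from `r > 0`.
  have hfr : (frontier A).Nonempty := by
    obtain ⟨a, -, ha⟩ := hne
    by_contra h
    rw [Set.not_nonempty_iff_eq_empty.1 h, infDist_empty] at ha
    linarith
  have hBconv : Convex ℝ {a ∈ A | r ≤ infDist a (frontier A)} := by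
    rw [inner_parallel_eq hAc.isClosed hfr hr]
    exact convex_inner_parallel hAconv r
  have hBcl : IsClosed {a ∈ A | r ≤ infDist a (frontier A)} :=
    hAc.isClosed.inter (isClosed_le continuous_const (continuous_infDist_pt _))
  have hdisj : ∀ x ∈ frontier A, x ∉ {a ∈ A | r ≤ infDist a (frontier A)} := by
    rintro x hx ⟨-, h⟩
    rw [infDist_zero_of_mem hx] at h
    linarith
  apply Set.Subset.antisymm
  · rintro _ ⟨x, hx, rfl⟩
    exact ⟨subset_closure (hp x).1, nearest_notMem_interior (hdisj x hx) (hp x).1 (hp x).2⟩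
  · intro b hb
    have hbB := hBcl.frontier_subset hb
    obtain ⟨v, hv0, hv⟩ := exists_outer_normal hBconv hbB hb.2
    obtain ⟨t, ht, htf⟩ := ray_meets_frontier hAc.isClosed hAc.isBounded hbB.1 hv0
    refine ⟨_, htf, nearest_eq_of_normal hbB ?_ (hp _).2⟩
    rw [add_sub_cancel_left, real_inner_smul_left]
    exact mul_nonpos_of_nonneg_of_nonpos ht (hv _ (hp _).1)
end
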